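/- Let n ≥ 4, 3 ≤ r < n − ⌊n/3⌋, 1 ≤ p ≤ q−2 ≤ n−2, and let A be a generating set of PORD(n,r). Then for each 1 ≤ s ≤ min{p, q−p, r−1} with (q,s) ≠ (n,1), there exists α ∈ A whose restriction to dom(γ_{p,q}^{r,s}) equals γ_{p,q}^{r,s}. -/

import Mathlib

/-!
Partial transformations on the chain X_n = {1 < 2 < ... < n}, encoded as
functions `ℕ → Option ℕ` (with `none` meaning "undefined"), composed
left-to-right: `x(αβ) = (xα)β`.
-/

namespace OrientedPT

noncomputable section
open scoped Classical

/-- A partial transformation, as a partial map on `ℕ`. -/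
def PTrans : Type := ℕ → Option ℕ

instance : Mul PTrans := ⟨fun f g x => (f x).bind g⟩

theorem mul_apply (f g : PTrans) (x : ℕ) : (f * g) x = (f x).bind g := rfl

instance : Semigroup PTrans where
  mul_assoc f g h := by
    funext x
    show ((f x).bind g).bind h = (f x).bind (fun y => (g y).bind h)
    cases f x <;> rfl

/-- The domain of a partial transformation. -/
def domSet (f : PTrans) : Set ℕ := {x | f x ≠ none}

/-- The image of a partial transformation. -/
def im (f : PTrans) : Set ℕ := {y | ∃ x, f x = some y}

/-- The set of fixed points: `fix(α) = {x ∈ dom α : xα = x}`. -/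
def fixSet (f : PTrans) : Set ℕ := {x | f x = some x}

/-- The value of `f` at `x` (defaulting to `0` off the domain). -/
def val (f : PTrans) (x : ℕ) : ℕ := (f x).getD 0

/-- `f` is a partial transformation on `X_n = {1,…,n}`. -/
def IsPT (n : ℕ) (f : PTrans) : Prop :=
  domSet f ⊆ Set.Icc 1 n ∧ im f ⊆ Set.Icc 1 n

/-- Order-decreasing: `xα ≤ x` for all `x ∈ dom α`. -/
def OrderDecr (f : PTrans) : Prop := ∀ x y, f x = some y → y ≤ x

/-- Order-preserving. -/
def OrderPres (f : PTrans) : Prop :=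
  ∀ x y u v, f x = some u → f y = some v → x ≤ y → u ≤ v

/-- Order-reversing. -/
def OrderRev (f : PTrans) : Prop :=
  ∀ x y u v, f x = some u → f y = some v → x ≤ y → v ≤ u

/-- Monotone: order-preserving or order-reversing. -/
def IsMonotone (f : PTrans) : Prop := OrderPres f ∨ OrderRev f

/-- Injectivity of a partial transformation. -/
def Inj (f : PTrans) : Prop := ∀ x y z, f x = some z → f y = some z → x = y

/-- The cyclic successor of `a` in the set `D`: the least element of `D`
above `a` if there is one, and otherwise the least element of `D`. -/
def cycSucc (D : Set ℕ) (a : ℕ) : ℕ :=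
  if {x ∈ D | a < x}.Nonempty then sInf {x ∈ D | a < x} else sInf D

/-- The cyclic descents of `f`: those `a ∈ dom f` whose cyclic successor in
`dom f` has a strictly smaller value. Writing `dom f = {x₁ < ⋯ < x_t}` these
are exactly the indices `1 ≤ i ≤ t` with `x_{i+1}α < x_iα` (where `x_{t+1} = x₁`). -/
def descents (f : PTrans) : Set ℕ :=
  {a ∈ domSet f | val f (cycSucc (domSet f) a) < val f a}

/-- The cyclic ascents of `f`. -/
def ascents (f : PTrans) : Set ℕ :=
  {a ∈ domSet f | val f a < val f (cycSucc (domSet f) a)}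

/-- Orientation-preserving: at most one cyclic descent. -/
def OrientPres (f : PTrans) : Prop := (descents f).ncard ≤ 1

/-- Orientation-reversing: at most one cyclic ascent. -/
def OrientRev (f : PTrans) : Prop := (ascents f).ncard ≤ 1

/-- Oriented: orientation-preserving or orientation-reversing. -/
def Oriented (f : PTrans) : Prop := OrientPres f ∨ OrientRev f

/-- `PORD n`: all oriented and order-decreasing partial transformations on `X_n`. -/
def PORD (n : ℕ) : Set PTrans := {f | IsPT n f ∧ Oriented f ∧ OrderDecr f}

/-- `PORD(n,r) = {α ∈ PORD_n : |im α| ≤ r}`. -/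
def PORDr (n r : ℕ) : Set PTrans := {f ∈ PORD n | (im f).ncard ≤ r}

/-- `POPD n`: the orientation-preserving elements of `PORD n`. -/
def POPD (n : ℕ) : Set PTrans := {f ∈ PORD n | OrientPres f}

/-- `PORD_n^* = PORD_n \ POPD_n`. -/
def PORDstar (n : ℕ) : Set PTrans := PORD n \ POPD n

/-- `PMD n`: monotone and order-decreasing partial transformations on `X_n`. -/
def PMD (n : ℕ) : Set PTrans := {f | IsPT n f ∧ IsMonotone f ∧ OrderDecr f}

/-- `PRD_n^* = PORD_n^* \ PMD_n`. -/
def PRDstar (n : ℕ) : Set PTrans := PORDstar n \ PMD n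

/-- `IORD n`: the injective elements of `PORD n`. -/
def IORD (n : ℕ) : Set PTrans := {f ∈ PORD n | Inj f}

/-- `IORD(n,r) = {α ∈ IORD_n : |im α| ≤ r}`. -/
def IORDr (n r : ℕ) : Set PTrans := {f ∈ IORD n | (im f).ncard ≤ r}

/-- `A` is a generating set of `S`: `A ⊆ S` and the smallest subsemigroup
containing `A` is `S`. -/
def IsGenSet (S A : Set PTrans) : Prop :=
  A ⊆ S ∧ (Subsemigroup.closure A : Set PTrans) = S

/-- A minimal generating set: a generating set of minimum cardinality. -/
def IsMinGenSet (S A : Set PTrans) : Prop :=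
  IsGenSet S A ∧ ∀ B : Set PTrans, IsGenSet S B → A.ncard ≤ B.ncard

/-- The rank of `S`: the minimum cardinality of a generating set of `S`. -/
def rank (S : Set PTrans) : ℕ :=
  sInf {k | ∃ A : Set PTrans, IsGenSet S A ∧ A.ncard = k}

/-- `z` is undecomposable in `S`: `z = xy` with `x, y ∈ S` forces `z = x` or `z = y`. -/
def Undecomposable (S : Set PTrans) (z : PTrans) : Prop :=
  ∀ x ∈ S, ∀ y ∈ S, z = x * y → z = x ∨ z = y

/-- `T` is a subsemigroup of (the semigroup given by the subset) `S`. -/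
def IsSubsemigroupOf (T S : Set PTrans) : Prop :=
  T ⊆ S ∧ ∀ a ∈ T, ∀ b ∈ T, a * b ∈ T

/-- `T` is a maximal subsemigroup of `S`: a maximal element, under inclusion,
of the family of proper subsemigroups of `S`. -/
def IsMaximalSubsemigroup (S T : Set PTrans) : Prop :=
  IsSubsemigroupOf T S ∧ T ≠ S ∧
    ∀ U : Set PTrans, IsSubsemigroupOf U S → U ≠ S → T ⊆ U → T = U

/-- The restriction of `f` to `Y`. -/
def restrict (f : PTrans) (Y : Set ℕ) : PTrans :=
  fun x => if x ∈ Y then f x else none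

/-- The partial identity `1_Y` on `Y`. -/
def partialId (Y : Set ℕ) : PTrans := fun x => if x ∈ Y then some x else none

/-- `ξ_{p,q}`: domain `[p, q+1]`, fixes every point of `[p,q]`, maps `q+1` to `p`. -/
def xi (p q : ℕ) : PTrans := fun x =>
  if p ≤ x ∧ x ≤ q then some x else if x = q + 1 then some p else none

/-- `γ_{p,q}` (for `1 ≤ p ≤ q−2 ≤ n−2`): with `k = min(p−1, q−p−1)` and
`l = min(q−p−1, n−q)`, it has domain `[p, p+k] ∪ [q, q+l]` and maps
`p+i ↦ p−i` and `q+j ↦ q−j`. -/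
def gamma (n p q : ℕ) : PTrans := fun x =>
  if p ≤ x ∧ x ≤ p + min (p - 1) (q - p - 1) then some (2 * p - x)
  else if q ≤ x ∧ x ≤ q + min (q - p - 1) (n - q) then some (2 * q - x)
  else none

/-- `γ_{p,q}^{r,s}`: with `u = min(r−s, q−p, n−q+1)`, it has domain
`[p, p+s−1] ∪ [q, q+u−1]` and maps `p+i ↦ p−i` and `q+j ↦ q−j`. -/
def gammaRS (n r p q s : ℕ) : PTrans := fun x =>
  if p ≤ x ∧ x + 1 ≤ p + s then some (2 * p - x)
  else if q ≤ x ∧ x + 1 ≤ q + min (r - s) (min (q - p) (n - q + 1)) then some (2 * q - x)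
  else none

/-- `δ^a_Y`: domain `Y ∪ {a}`, fixes every point of `Y`, maps `a` to `a−1`. -/
def deltaMap (a : ℕ) (Y : Set ℕ) : PTrans :=
  fun x => if x ∈ Y then some x else if x = a then some (a - 1) else none

/-- `ζ_Z`: with `a = max Z` and `b = min Z`, domain `Z ∪ {a+1}`, fixes every
point of `Z`, maps `a+1` to `b−1`. -/
def zetaMap (Z : Set ℕ) : PTrans :=
  fun x => if x ∈ Z then some x else if x = sSup Z + 1 then some (sInf Z - 1) else none

/-- `E_r`: the idempotents of `PORD_n` with image of size exactly `r`. -/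
def Eset (n r : ℕ) : Set PTrans := {f ∈ PORD n | f * f = f ∧ (im f).ncard = r}

/-- `F_r = {ξ_{p,q}^r : 1 ≤ p ≤ n−2, p+1 ≤ q ≤ p+r−2 ≤ n−1}`. -/
def Fset (n r : ℕ) : Set PTrans :=
  {f | ∃ p q : ℕ, 1 ≤ p ∧ p + 2 ≤ n ∧ p + 1 ≤ q ∧ q + 2 ≤ p + r ∧ p + r ≤ n + 1 ∧
    f = xi p q}

/-- `G_n = {γ_{p,q} : 1 ≤ p ≤ q−2 ≤ n−2} \ {γ_{1,n}}`. -/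
def Gset (n : ℕ) : Set PTrans :=
  {f | ∃ p q : ℕ, 1 ≤ p ∧ p + 2 ≤ q ∧ q ≤ n ∧ f = gamma n p q} \ {gamma n 1 n}

/-- `H_n^r = {γ_{p,q}^{r,s} : 1 ≤ p ≤ q−2 ≤ n−2, 1 ≤ s ≤ min{p, q−p, r−1}, (q,s) ≠ (n,1)}`. -/
def Hset (n r : ℕ) : Set PTrans :=
  {f | ∃ p q s : ℕ, 1 ≤ p ∧ p + 2 ≤ q ∧ q ≤ n ∧ 1 ≤ s ∧
    s ≤ min p (min (q - p) (r - 1)) ∧ ¬(q = n ∧ s = 1) ∧ f = gammaRS n r p q s}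

/-- `EI_r = {1_Y : Y ⊆ X_n, |Y| = r}`. -/
def EIset (n r : ℕ) : Set PTrans :=
  {f | ∃ Y : Set ℕ, Y ⊆ Set.Icc 1 n ∧ Y.ncard = r ∧ f = partialId Y}

/-- `FI_r = {δ^a_Y : 2 ≤ a ≤ n, Y ⊆ X_n \ {a−1,a}, |Y| = r−1}`. -/
def FIset (n r : ℕ) : Set PTrans :=
  {f | ∃ (a : ℕ) (Y : Set ℕ), 2 ≤ a ∧ a ≤ n ∧ Y ⊆ Set.Icc 1 n \ {a - 1, a} ∧
    Y.ncard = r - 1 ∧ f = deltaMap a Y}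

/-- `GI_k = {ζ_Z : Z ⊆ X_n \ {1,n}, |Z| = k−1}`. -/
def GIset (n k : ℕ) : Set PTrans :=
  {f | ∃ Z : Set ℕ, Z ⊆ Set.Icc 1 n \ {1, n} ∧ Z.ncard = k - 1 ∧ f = zetaMap Z}

/-- `GI_k^c`: those `ζ_Z ∈ GI_k` with `Z` a convex subset (an interval). -/
def GIcset (n k : ℕ) : Set PTrans :=
  {f | ∃ Z : Set ℕ, Z ⊆ Set.Icc 1 n \ {1, n} ∧ Z.ncard = k - 1 ∧ Z.OrdConnected ∧
    f = zetaMap Z}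

/-- `F^r_{p,q} = {α ∈ PORD(n,r) : α restricted to [p, q+1] equals ξ_{p,q}^r}`. -/
def Frestr (n r p q : ℕ) : Set PTrans :=
  {f ∈ PORDr n r | restrict f (Set.Icc p (q + 1)) = xi p q}

/-- `G_{p,q} = {α ∈ PORD^*(n,r) : α restricted to dom(γ_{p,q}) equals γ_{p,q}}`. -/
def Grestr (n r p q : ℕ) : Set PTrans :=
  {f ∈ PORDr n r ∩ PORDstar n | restrict f (domSet (gamma n p q)) = gamma n p q}

/-- `H^{r,s}_{p,q} = {α ∈ PORD^*(n,r) : α restricted to dom(γ^{r,s}_{p,q}) equals γ^{r,s}_{p,q}}`. -/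
def Hrestr (n r p q s : ℕ) : Set PTrans :=
  {f ∈ PORDr n r ∩ PORDstar n |
    restrict f (domSet (gammaRS n r p q s)) = gammaRS n r p q s}

end

end OrientedPT
namespace OrientedPT

section Cyclic

variable {D : Set ℕ} {g : ℕ → ℤ}

theorem cycSucc_eq {a b : ℕ} (hb : b ∈ D) (hab : a < b) (hmin : ∀ c ∈ D, a < c → b ≤ c) :
    cycSucc D a = b := by
  have hne : {x ∈ D | a < x}.Nonempty := ⟨b, hb, hab⟩
  rw [cycSucc, if_pos hne]
  have hmem := Nat.sInf_mem hne
  exact le_antisymm (Nat.sInf_le ⟨hb, hab⟩) (hmin _ hmem.1 hmem.2)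

theorem cycSucc_eq_of_max {a b : ℕ} (hb : b ∈ D) (hmax : ∀ c ∈ D, c ≤ a)
    (hmin : ∀ c ∈ D, b ≤ c) : cycSucc D a = b := by
  have hne : ¬ {x ∈ D | a < x}.Nonempty := fun ⟨c, hc, hac⟩ =>
    absurd (hmax c hc) (not_le.mpr hac)
  rw [cycSucc, if_neg hne]
  exact le_antisymm (Nat.sInf_le hb) (hmin _ (Nat.sInf_mem ⟨b, hb⟩))

/-- A decrease between two points of `D` forces a descent between them. -/
theorem exists_descent_between {x y : ℕ} (hx : x ∈ D) (hy : y ∈ D) (hxy : x < y)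
    (h : g y < g x) : ∃ a ∈ D, x ≤ a ∧ a < y ∧ g (cycSucc D a) < g a := by
  induction hk : y - x using Nat.strong_induction_on generalizing x with
  | _ k ih =>
    have hne : {z ∈ D | x < z}.Nonempty := ⟨y, hy, hxy⟩
    have hb : cycSucc D x = sInf {z ∈ D | x < z} := by rw [cycSucc, if_pos hne]
    have hbmem : cycSucc D x ∈ D ∧ x < cycSucc D x := hb ▸ Nat.sInf_mem hne
    have hby : cycSucc D x ≤ y := hb ▸ Nat.sInf_le ⟨hy, hxy⟩
    by_cases hd : g (cycSucc D x) < g x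
    · exact ⟨x, hx, le_rfl, hxy, hd⟩
    · have hby' : cycSucc D x < y := lt_of_le_of_ne hby (fun e => hd (e ▸ h))
      obtain ⟨a, ha, h1, h2, h3⟩ :=
        ih (y - cycSucc D x) (by omega) hbmem.1 hby' (by omega) rfl
      exact ⟨a, ha, by omega, h2, h3⟩

/-- A decrease from `z` to `x` read around the cycle forces a descent outside `[x, z)`. -/
theorem exists_descent_around (hD : D.Finite) {x z : ℕ} (hx : x ∈ D) (hz : z ∈ D)
    (h : g x < g z) : ∃ a ∈ D, (z ≤ a ∨ a < x) ∧ g (cycSucc D a) < g a := by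
  obtain ⟨M, hM, hMmax⟩ := hD.exists_maximalFor id D ⟨x, hx⟩
  have hMmax' : ∀ c ∈ D, c ≤ M := fun c hc => by
    by_contra hlt
    exact hlt (hMmax hc (le_of_not_ge hlt))
  have hm : sInf D ∈ D := Nat.sInf_mem ⟨x, hx⟩
  have hmmin : ∀ c ∈ D, sInf D ≤ c := fun c hc => Nat.sInf_le hc
  by_cases hd : g (sInf D) < g M
  · exact ⟨M, hM, Or.inl (hMmax' z hz), by rwa [cycSucc_eq_of_max hm hMmax' hmmin]⟩
  by_cases hxm : g x < g (sInf D)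
  · have hne : sInf D ≠ x := fun e => by rw [e] at hxm; exact lt_irrefl _ hxm
    obtain ⟨a, ha, -, h2, h3⟩ :=
      exists_descent_between hm hx (lt_of_le_of_ne (hmmin x hx) hne) hxm
    exact ⟨a, ha, Or.inr h2, h3⟩
  · have hMz : g M < g z := by omega
    have hne : z ≠ M := fun e => by rw [e] at hMz; exact lt_irrefl _ hMz
    obtain ⟨a, ha, h1, -, h3⟩ :=
      exists_descent_between hz hM (lt_of_le_of_ne (hMmax' z hz) hne) hMz
    exact ⟨a, ha, Or.inl h1, h3⟩

/-- With at most one cyclic descent, every triple of points has at most one cyclic descent. -/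
theorem triple_of_ncard_descents_le_one (hD : D.Finite)
    (hcard : {a ∈ D | g (cycSucc D a) < g a}.ncard ≤ 1) {x y z : ℕ} (hx : x ∈ D) (hy : y ∈ D)
    (hz : z ∈ D) (hxy : x < y) (hyz : y < z) :
    ¬ (g y < g x ∧ g z < g y) ∧ ¬ (g y < g x ∧ g x < g z) ∧ ¬ (g z < g y ∧ g x < g z) := by
  have huniq := (Set.ncard_le_one (hD.subset (Set.sep_subset _ _))).mp hcard
  refine ⟨fun ⟨h1, h2⟩ => ?_, fun ⟨h1, h2⟩ => ?_, fun ⟨h1, h2⟩ => ?_⟩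
  · obtain ⟨a, ha, _, _, ha'⟩ := exists_descent_between hx hy hxy h1
    obtain ⟨b, hb, _, _, hb'⟩ := exists_descent_between hy hz hyz h2
    have := huniq a ⟨ha, ha'⟩ b ⟨hb, hb'⟩
    omega
  · obtain ⟨a, ha, _, _, ha'⟩ := exists_descent_between hx hy hxy h1
    obtain ⟨b, hb, _, hb'⟩ := exists_descent_around hD hx hz h2
    have := huniq a ⟨ha, ha'⟩ b ⟨hb, hb'⟩
    omega
  · obtain ⟨a, ha, _, _, ha'⟩ := exists_descent_between hy hz hyz h1
    obtain ⟨b, hb, _, hb'⟩ := exists_descent_around hD hx hz h2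
    have := huniq a ⟨ha, ha'⟩ b ⟨hb, hb'⟩
    omega

end Cyclic

theorem val_eq {f : PTrans} {x a : ℕ} (h : f x = some a) : val f x = a := by
  simp [val, h]

theorem mem_domSet {f : PTrans} {x a : ℕ} (h : f x = some a) : x ∈ domSet f := by
  simp [domSet, h]

theorem OrientPres.triple {f : PTrans} (hf : OrientPres f) (hD : (domSet f).Finite)
    {x y z a b c : ℕ} (hx : f x = some a) (hy : f y = some b) (hz : f z = some c)
    (hxy : x < y) (hyz : y < z) :
    ¬ (b < a ∧ c < b) ∧ ¬ (b < a ∧ a < c) ∧ ¬ (c < b ∧ a < c) := by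
  have := triple_of_ncard_descents_le_one (g := fun x => (val f x : ℤ)) hD
    (by simpa [OrientPres, descents] using hf)
    (mem_domSet hx) (mem_domSet hy) (mem_domSet hz) hxy hyz
  simpa [val_eq hx, val_eq hy, val_eq hz] using this

theorem OrientRev.triple {f : PTrans} (hf : OrientRev f) (hD : (domSet f).Finite)
    {x y z a b c : ℕ} (hx : f x = some a) (hy : f y = some b) (hz : f z = some c)
    (hxy : x < y) (hyz : y < z) :
    ¬ (a < b ∧ b < c) ∧ ¬ (a < b ∧ c < a) ∧ ¬ (b < c ∧ c < a) := by
  have := triple_of_ncard_descents_le_one (g := fun x => -(val f x : ℤ)) hD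
    (by simpa [OrientRev, ascents] using hf)
    (mem_domSet hx) (mem_domSet hy) (mem_domSet hz) hxy hyz
  simpa [val_eq hx, val_eq hy, val_eq hz] using this

/-- The map `p + i ↦ p - i` for `i < s` and `q + j ↦ q - j` for `j < u`. -/
def reflectPair (p q s u : ℕ) : PTrans := fun x =>
  if p ≤ x ∧ x + 1 ≤ p + s then some (2 * p - x)
  else if q ≤ x ∧ x + 1 ≤ q + u then some (2 * q - x)
  else none

section Reflect

variable {n r p q s u : ℕ}

theorem reflectPair_eq_some {x y : ℕ} :
    reflectPair p q s u x = some y ↔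
      (p ≤ x ∧ x + 1 ≤ p + s ∧ 2 * p - x = y) ∨
      (¬ (p ≤ x ∧ x + 1 ≤ p + s) ∧ q ≤ x ∧ x + 1 ≤ q + u ∧ 2 * q - x = y) := by
  unfold reflectPair
  split_ifs <;> simp <;> omega

theorem mem_domSet_reflectPair {x : ℕ} :
    x ∈ domSet (reflectPair p q s u) ↔
      (p ≤ x ∧ x + 1 ≤ p + s) ∨ (q ≤ x ∧ x + 1 ≤ q + u) := by
  simp only [domSet, reflectPair, Set.mem_ofPred_eq]
  split_ifs <;> simp <;> omega

theorem orientRev_reflectPair (hs : 1 ≤ s) (hu : 1 ≤ u) (hsp : s ≤ p) (hsq : p + s ≤ q)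
    (huq : p + u ≤ q) : OrientRev (reflectPair p q s u) := by
  have hsub : ascents (reflectPair p q s u) ⊆ {p + s - 1} := by
    rintro a ⟨ha, hasc⟩
    rw [Set.mem_singleton_iff]
    by_contra hne
    have hleft : ∀ x, p ≤ x → x + 1 ≤ p + s → val (reflectPair p q s u) x = 2 * p - x :=
      fun x h1 h2 => val_eq (reflectPair_eq_some.mpr (Or.inl ⟨h1, h2, rfl⟩))
    have hright : ∀ x, q ≤ x → x + 1 ≤ q + u → val (reflectPair p q s u) x = 2 * q - x :=
      fun x h1 h2 => val_eq (reflectPair_eq_some.mpr (Or.inr ⟨by omega, h1, h2, rfl⟩))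
    rcases mem_domSet_reflectPair.mp ha with ⟨h1, h2⟩ | ⟨h1, h2⟩
    · rw [cycSucc_eq (b := a + 1) (mem_domSet_reflectPair.mpr (by omega)) (by omega)
        (fun c _ hc => hc), hleft a h1 h2, hleft (a + 1) (by omega) (by omega)] at hasc
      omega
    · by_cases hlast : a + 1 = q + u
      · rw [cycSucc_eq_of_max (b := p) (mem_domSet_reflectPair.mpr (by omega))
          (fun c hc => by have := mem_domSet_reflectPair.mp hc; omega)
          (fun c hc => by have := mem_domSet_reflectPair.mp hc; omega),
          hright a h1 h2, hleft p (by omega) (by omega)] at hasc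
        omega
      · rw [cycSucc_eq (b := a + 1) (mem_domSet_reflectPair.mpr (by omega)) (by omega)
          (fun c _ hc => hc), hright a h1 h2, hright (a + 1) (by omega) (by omega)] at hasc
        omega
  calc (ascents (reflectPair p q s u)).ncard
      ≤ ({p + s - 1} : Set ℕ).ncard := Set.ncard_le_ncard hsub (Set.finite_singleton _)
    _ = 1 := Set.ncard_singleton _

theorem ncard_im_reflectPair_le (hsp : s ≤ p) (huq : p + u ≤ q) :
    (im (reflectPair p q s u)).ncard ≤ s + u := by
  have hsub : im (reflectPair p q s u) ⊆
      ((Finset.Ioc (p - s) p ∪ Finset.Ioc (q - u) q : Finset ℕ) : Set ℕ) := by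
    rintro y ⟨x, hxy⟩
    have := reflectPair_eq_some.mp hxy
    simp only [Finset.coe_union, Finset.coe_Ioc, Set.mem_union, Set.mem_Ioc]
    omega
  calc (im (reflectPair p q s u)).ncard
      ≤ (Finset.Ioc (p - s) p ∪ Finset.Ioc (q - u) q).card := by
        rw [← Set.ncard_coe_finset]
        exact Set.ncard_le_ncard hsub (Finset.finite_toSet _)
    _ ≤ (Finset.Ioc (p - s) p).card + (Finset.Ioc (q - u) q).card := Finset.card_union_le _ _
    _ = s + u := by simp only [Nat.card_Ioc]; omega

theorem reflectPair_mem_PORDr (hs : 1 ≤ s) (hu : 1 ≤ u) (hsp : s ≤ p) (hsq : p + s ≤ q)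
    (huq : p + u ≤ q) (hun : q + u ≤ n + 1) (hr : s + u ≤ r) :
    reflectPair p q s u ∈ PORDr n r := by
  refine ⟨⟨⟨fun x hx => ?_, ?_⟩, Or.inr (orientRev_reflectPair hs hu hsp hsq huq), ?_⟩,
    (ncard_im_reflectPair_le hsp huq).trans hr⟩
  · have := mem_domSet_reflectPair.mp hx
    rw [Set.mem_Icc]
    omega
  · rintro y ⟨x, hxy⟩
    have := reflectPair_eq_some.mp hxy
    rw [Set.mem_Icc]
    omega
  · intro x y hxy
    have := reflectPair_eq_some.mp hxy
    omega

/-- `f` is defined and injective on `dom γ` and lies above `γ` there; any left factor of `γ`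
among the order-decreasing maps has this property. -/
def InjAbove (γ f : PTrans) : Prop :=
  (∀ x y, γ x = some y → ∃ v, f x = some v ∧ y ≤ v) ∧
    ∀ x ∈ domSet γ, ∀ x' ∈ domSet γ, f x = f x' → x = x'

theorem add_le_of_strictMono_on {s c : ℕ} {v : ℕ → ℕ} (h0 : c ≤ v 0)
    (h : ∀ j, j + 1 < s → v j < v (j + 1)) : ∀ j < s, c + j ≤ v j
  | 0, _ => h0
  | j + 1, hj => by
    have := add_le_of_strictMono_on h0 h j (by omega)
    have := h j hj
    omega

theorem add_le_of_strictAnti_on {s c : ℕ} {v : ℕ → ℕ} (h0 : v 0 ≤ c)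
    (h : ∀ j, j + 1 < s → v (j + 1) < v j) : ∀ j < s, v j + j ≤ c
  | 0, _ => h0
  | j + 1, hj => by
    have := add_le_of_strictAnti_on h0 h j (by omega)
    have := h j hj
    omega

theorem InjAbove.fixes_or_eq {f : PTrans} (hf : f ∈ PORD n) (hs : 1 ≤ s) (hu : 1 ≤ u)
    (hsp : s ≤ p) (hsq : p + s ≤ q) (huq : p + u ≤ q)
    (h : InjAbove (reflectPair p q s u) f) :
    (∀ x ∈ domSet (reflectPair p q s u), f x = some x) ∨
      ∀ x ∈ domSet (reflectPair p q s u), f x = reflectPair p q s u x := by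
  obtain ⟨⟨hdom, -⟩, hor, hdec⟩ := hf
  have hD : (domSet f).Finite := (Set.finite_Icc 1 n).subset hdom
  obtain ⟨hab, hinj⟩ := h
  have hL : ∀ i < s, f (p + i) = some (val f (p + i)) ∧ p ≤ val f (p + i) + i ∧
      val f (p + i) ≤ p + i := fun i hi => by
    obtain ⟨v, hv, hle⟩ := hab (p + i) _
      (reflectPair_eq_some.mpr (Or.inl ⟨by omega, by omega, rfl⟩))
    rw [val_eq hv]
    exact ⟨hv, by omega, hdec _ _ hv⟩
  have hR : ∀ j < u, f (q + j) = some (val f (q + j)) ∧ q ≤ val f (q + j) + j ∧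
      val f (q + j) ≤ q + j := fun j hj => by
    obtain ⟨v, hv, hle⟩ := hab (q + j) _
      (reflectPair_eq_some.mpr (Or.inr ⟨by omega, by omega, by omega, rfl⟩))
    rw [val_eq hv]
    exact ⟨hv, by omega, hdec _ _ hv⟩
  have hp0 := hL 0 hs
  have hq0 := hR 0 hu
  simp only [Nat.add_zero] at hp0 hq0
  have hLne : ∀ i, i + 1 < s → val f (p + i) ≠ val f (p + (i + 1)) := fun i hi he => by
    have := hinj (p + i) (mem_domSet_reflectPair.mpr (by omega)) (p + (i + 1))
      (mem_domSet_reflectPair.mpr (by omega))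
      (by rw [(hL i (by omega)).1, (hL (i + 1) hi).1, he])
    omega
  have hRne : ∀ i, i + 1 < u → val f (q + i) ≠ val f (q + (i + 1)) := fun i hi he => by
    have := hinj (q + i) (mem_domSet_reflectPair.mpr (by omega)) (q + (i + 1))
      (mem_domSet_reflectPair.mpr (by omega))
      (by rw [(hR i (by omega)).1, (hR (i + 1) hi).1, he])
    omega
  rcases hor with hor | hor
  · left
    have hLmono := add_le_of_strictMono_on (s := s) (c := p) (v := fun i => val f (p + i))
      (by simp only [Nat.add_zero]; omega) (fun i hi => by
        have h1 := hL i (by omega)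
        have h2 := hL (i + 1) hi
        have := hor.triple hD h1.1 h2.1 hq0.1 (by omega) (by omega)
        have := hLne i hi
        show val f (p + i) < val f (p + (i + 1))
        omega)
    have hRmono := add_le_of_strictMono_on (s := u) (c := q) (v := fun i => val f (q + i))
      (by simp only [Nat.add_zero]; omega) (fun i hi => by
        have h1 := hR i (by omega)
        have h2 := hR (i + 1) hi
        have := hor.triple hD hp0.1 h1.1 h2.1 (by omega) (by omega)
        have := hRne i hi
        show val f (q + i) < val f (q + (i + 1))
        omega)
    intro x hx
    rcases mem_domSet_reflectPair.mp hx with ⟨h1, h2⟩ | ⟨h1, h2⟩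
    · obtain ⟨i, rfl⟩ := Nat.exists_eq_add_of_le h1
      have := hL i (by omega)
      have := hLmono i (by omega)
      rw [(hL i (by omega)).1]
      congr 1
      omega
    · obtain ⟨i, rfl⟩ := Nat.exists_eq_add_of_le h1
      have := hR i (by omega)
      have := hRmono i (by omega)
      rw [(hR i (by omega)).1]
      congr 1
      omega
  · right
    have hLanti := add_le_of_strictAnti_on (s := s) (c := p) (v := fun i => val f (p + i))
      (by simp only [Nat.add_zero]; omega) (fun i hi => by
        have h1 := hL i (by omega)
        have h2 := hL (i + 1) hi
        have := hor.triple hD h1.1 h2.1 hq0.1 (by omega) (by omega)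
        have := hLne i hi
        show val f (p + (i + 1)) < val f (p + i)
        omega)
    have hRanti := add_le_of_strictAnti_on (s := u) (c := q) (v := fun i => val f (q + i))
      (by simp only [Nat.add_zero]; omega) (fun i hi => by
        have h1 := hR i (by omega)
        have h2 := hR (i + 1) hi
        have := hor.triple hD hp0.1 h1.1 h2.1 (by omega) (by omega)
        have := hRne i hi
        show val f (q + (i + 1)) < val f (q + i)
        omega)
    intro x hx
    rcases mem_domSet_reflectPair.mp hx with ⟨h1, h2⟩ | ⟨h1, h2⟩
    · obtain ⟨i, rfl⟩ := Nat.exists_eq_add_of_le h1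
      have := hL i (by omega)
      have := hLanti i (by omega)
      rw [(hL i (by omega)).1, eq_comm, reflectPair_eq_some]
      left
      omega
    · obtain ⟨i, rfl⟩ := Nat.exists_eq_add_of_le h1
      have := hR i (by omega)
      have := hRanti i (by omega)
      rw [(hR i (by omega)).1, eq_comm, reflectPair_eq_some]
      right
      omega

end Reflect

theorem InjAbove.of_mul {γ f g : PTrans} (hg : OrderDecr g) (h : InjAbove γ (f * g)) :
    InjAbove γ f := by
  refine ⟨fun x y hxy => ?_, fun x hx x' hx' he => h.2 x hx x' hx' ?_⟩
  · obtain ⟨v, hv, hle⟩ := h.1 x y hxy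
    obtain ⟨w, hw, hwv⟩ := Option.bind_eq_some_iff.mp hv
    exact ⟨w, hw, hle.trans (hg w v hwv)⟩
  · rw [mul_apply, mul_apply, he]

theorem mul_apply_of_fixes {f g : PTrans} {x : ℕ} (h : f x = some x) : (f * g) x = g x := by
  rw [mul_apply, h]
  rfl

theorem InjAbove.of_mul_of_fixes {γ f g : PTrans} (hf : ∀ x ∈ domSet γ, f x = some x)
    (h : InjAbove γ (f * g)) : InjAbove γ g := by
  refine ⟨fun x y hxy => ?_, fun x hx x' hx' he => h.2 x hx x' hx' ?_⟩
  · rw [← mul_apply_of_fixes (g := g) (hf x (mem_domSet hxy))]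
    exact h.1 x y hxy
  · rw [mul_apply_of_fixes (hf x hx), mul_apply_of_fixes (hf x' hx'), he]

theorem injAbove_reflectPair_self {p q s u : ℕ} (hsp : s ≤ p) (huq : p + u ≤ q) :
    InjAbove (reflectPair p q s u) (reflectPair p q s u) := by
  refine ⟨fun x y hxy => ⟨y, hxy, le_rfl⟩, fun x hx x' hx' he => ?_⟩
  obtain ⟨y, hy⟩ := Option.ne_none_iff_exists'.mp hx
  have h1 := reflectPair_eq_some.mp hy
  have h2 := reflectPair_eq_some.mp (he ▸ hy)
  omega

/-- Every generating set of `PORD(n,r)` contains an extension of `reflectPair p q s u`. -/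
theorem exists_mem_genSet_eq_reflectPair {n r p q s u : ℕ} {A : Set PTrans}
    (hA : IsGenSet (PORDr n r) A) (hs : 1 ≤ s) (hu : 1 ≤ u) (hsu : 3 ≤ s + u) (hsp : s ≤ p)
    (hsq : p + s ≤ q) (huq : p + u ≤ q) (hun : q + u ≤ n + 1) (hr : s + u ≤ r) :
    ∃ α ∈ A, ∀ x ∈ domSet (reflectPair p q s u), α x = reflectPair p q s u x := by
  by_contra hno
  have hmem : ∀ {f : PTrans}, f ∈ Subsemigroup.closure A → f ∈ PORDr n r := fun hf =>
    hA.2 ▸ (SetLike.mem_coe.mpr hf)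
  have key : ∀ f ∈ Subsemigroup.closure A, InjAbove (reflectPair p q s u) f →
      ∀ x ∈ domSet (reflectPair p q s u), f x = some x := by
    intro f hf
    induction hf using Subsemigroup.closure_induction with
    | mem f hfA =>
      intro h
      exact (h.fixes_or_eq (hA.1 hfA).1 hs hu hsp hsq huq).resolve_right
        fun he => hno ⟨f, hfA, he⟩
    | mul f g _ hg ihf ihg =>
      intro h
      have hfix := ihf (h.of_mul (hmem hg).1.2.2)
      intro x hx
      rw [mul_apply_of_fixes (hfix x hx)]
      exact ihg (h.of_mul_of_fixes hfix) x hx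
  have hγ : reflectPair p q s u ∈ Subsemigroup.closure A := by
    rw [← SetLike.mem_coe, hA.2]
    exact reflectPair_mem_PORDr hs hu hsp hsq huq hun hr
  have hfix := key _ hγ (injAbove_reflectPair_self hsp huq)
  by_cases h2 : 2 ≤ s
  · have := reflectPair_eq_some.mp (hfix (p + 1) (mem_domSet_reflectPair.mpr (by omega)))
    omega
  · have := reflectPair_eq_some.mp (hfix (q + 1) (mem_domSet_reflectPair.mpr (by omega)))
    omega

end OrientedPT

open OrientedPT in
/-- For `n ≥ 4`, `3 ≤ r < n − ⌊n/3⌋`, `1 ≤ p ≤ q−2 ≤ n−2`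
and any generating set `A` of `PORD(n,r)`: for each `1 ≤ s ≤ min{p, q−p, r−1}`
with `(q,s) ≠ (n,1)` there is `α ∈ A` whose restriction to `dom(γ_{p,q}^{r,s})`
equals `γ_{p,q}^{r,s}`. -/
theorem genSet_contains_gammaRS (n r p q : ℕ) (hn : 4 ≤ n) (hr1 : 3 ≤ r)
    (hr2 : r < n - n / 3) (hp : 1 ≤ p) (hpq : p + 2 ≤ q) (hq : q ≤ n)
    (A : Set PTrans) (hA : IsGenSet (PORDr n r) A) :
    ∀ s : ℕ, 1 ≤ s → s ≤ min p (min (q - p) (r - 1)) → ¬(q = n ∧ s = 1) →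
      ∃ α ∈ A, restrict α (domSet (gammaRS n r p q s)) = gammaRS n r p q s := by
  intro s hs hsmin hqs
  obtain ⟨α, hα, heq⟩ := exists_mem_genSet_eq_reflectPair (p := p) (q := q)
    (u := min (r - s) (min (q - p) (n - q + 1))) hA hs (by omega) (by omega) (by omega)
    (by omega) (by omega) (by omega) (by omega)
  refine ⟨α, hα, funext fun x => ?_⟩
  change restrict α (domSet (reflectPair p q s _)) x = reflectPair p q s _ x
  unfold restrict
  split_ifs with hx
  · exact heq x hx
  · exact (not_not.mp hx).symm
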